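/- There do not exist probability distributions P_λ on {0,1}, and conditional probabilities P_{A,λ}(a|x), P_{B,λ}(b|y) for a,b,x,y,λ ∈ {0,1}, such that the box P(ab|xy) = Σ_λ P_λ(λ) P_{A,λ}(a|x) P_{B,λ}(b|y) equals the noisy PR box with parameter p > 0. That is, the noisy PR box with p > 0 cannot be simulated by a local hidden variable model with a binary shared variable. -/

import Mathlib

open Finset Real

noncomputable section

/-- A two-input two-output box: `P a b x y` is the probability of outputs `a, b`
given inputs `x, y`. -/
abbrev Box := Fin 2 → Fin 2 → Fin 2 → Fin 2 → ℝ

/-- The correlator `⟨A_x B_y⟩`. -/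
def corr (P : Box) (x y : Fin 2) : ℝ :=
  ∑ a : Fin 2, ∑ b : Fin 2, (-1 : ℝ) ^ ((a : ℕ) + (b : ℕ)) * P a b x y

/-- Alice's marginal expectation `⟨A_x⟩` (computed with Bob's input `y`). -/
def margA (P : Box) (x y : Fin 2) : ℝ :=
  ∑ a : Fin 2, ∑ b : Fin 2, (-1 : ℝ) ^ ((a : ℕ)) * P a b x y

/-- Bob's marginal expectation `⟨B_y⟩` (computed with Alice's input `x`). -/
def margB (P : Box) (x y : Fin 2) : ℝ :=
  ∑ a : Fin 2, ∑ b : Fin 2, (-1 : ℝ) ^ ((b : ℕ)) * P a b x y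

/-- The absolute CHSH expression `B_{2α+β}`. -/
def bell (P : Box) (α β : Fin 2) : ℝ :=
  |corr P 0 0 + (-1 : ℝ) ^ (β : ℕ) * corr P 0 1 + (-1 : ℝ) ^ (α : ℕ) * corr P 1 0
    + (-1 : ℝ) ^ ((α : ℕ) + (β : ℕ) + 1) * corr P 1 1|

/-- Bell strength `Γ`. -/
def gammaStrength (P : Box) : ℝ :=
  min (|(|bell P 0 0 - bell P 0 1|) - (|bell P 1 0 - bell P 1 1|)|)
    (min (|(|bell P 0 0 - bell P 1 0|) - (|bell P 0 1 - bell P 1 1|)|)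
      (|(|bell P 0 0 - bell P 1 1|) - (|bell P 0 1 - bell P 1 0|)|))

/-- Valid box: nonnegative and normalized. -/
def IsBox (P : Box) : Prop :=
  (∀ a b x y, 0 ≤ P a b x y) ∧ ∀ x y, ∑ a : Fin 2, ∑ b : Fin 2, P a b x y = 1

/-- Nonsignaling condition. -/
def NonSignaling (P : Box) : Prop :=
  (∀ a x y y', ∑ b : Fin 2, P a b x y = ∑ b : Fin 2, P a b x y') ∧
  (∀ b x x' y, ∑ a : Fin 2, P a b x y = ∑ a : Fin 2, P a b x' y)

/-- The noisy PR box `p·P_PR + (1-p)·P_N`. -/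
def noisyPR (p : ℝ) : Box := fun a b x y =>
  (1 + (-1 : ℝ) ^ ((a : ℕ) + (b : ℕ) + (x : ℕ) * (y : ℕ)) * p) / 4

/-- The PR box `P_PR^{αβγ}` (addition/multiplication in `Fin 2` is mod 2). -/
def PRbox (α β γ : Fin 2) : Box := fun a b x y =>
  if a + b = x * y + α * x + β * y + γ then 1 / 2 else 0

/-- The local deterministic box `P_D^{αβγε}`. -/
def detBox (α β γ ε : Fin 2) : Box := fun a b x y =>
  if a = α * x + β ∧ b = γ * y + ε then 1 else 0

/-- The noisy PR box with `p > 0` cannot be simulated by a local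
hidden variable model with a binary shared variable. -/
theorem noisyPR_not_binary_LHV (p : ℝ) (hp : 0 < p) :
    ¬ ∃ (q : Fin 2 → ℝ) (PA PB : Fin 2 → Fin 2 → Fin 2 → ℝ),
      (∀ l, 0 ≤ q l) ∧ (∑ l : Fin 2, q l = 1) ∧
      (∀ l a x, 0 ≤ PA l a x) ∧ (∀ l x, ∑ a : Fin 2, PA l a x = 1) ∧
      (∀ l b y, 0 ≤ PB l b y) ∧ (∀ l y, ∑ b : Fin 2, PB l b y = 1) ∧
      (∀ a b x y, (∑ l : Fin 2, q l * PA l a x * PB l b y) = noisyPR p a b x y) := by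
  rintro ⟨q, PA, PB, -, hq, -, hA, -, hB, h⟩
  simp only [Fin.sum_univ_two] at hq hA hB h
  have mA : ∀ x, q 0 * PA 0 0 x + q 1 * PA 1 0 x = 1 / 2 := by
    intro x
    have h0 := h 0 0 x 0
    have h1 := h 0 1 x 0
    simp [noisyPR] at h0 h1
    linear_combination h0 + h1 - q 0 * PA 0 0 x * hB 0 0 - q 1 * PA 1 0 x * hB 1 0
  have mB : ∀ y, q 0 * PB 0 0 y + q 1 * PB 1 0 y = 1 / 2 := by
    intro y
    have h0 := h 0 0 0 y
    have h1 := h 1 0 0 y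
    simp [noisyPR] at h0 h1
    linear_combination h0 + h1 - q 0 * PB 0 0 y * hA 0 0 - q 1 * PB 1 0 y * hA 1 0
  -- the covariance matrix has rank one
  have cov : ∀ x y, q 0 * q 1 * (PA 0 0 x - PA 1 0 x) * (PB 0 0 y - PB 1 0 y)
      = noisyPR p 0 0 x y - 1 / 4 := by
    intro x y
    have e : q 1 = 1 - q 0 := by linarith
    have h0 := h 0 0 x y
    have ma := mA x
    have mb := mB y
    rw [e] at h0 ma mb ⊢
    linear_combination h0 - (q 0 * PB 0 0 y + (1 - q 0) * PB 1 0 y) * ma - 1 / 2 * mb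
  have c00 := cov 0 0
  have c01 := cov 0 1
  have c10 := cov 1 0
  have c11 := cov 1 1
  have key : (noisyPR p 0 0 0 0 - 1 / 4) * (noisyPR p 0 0 1 1 - 1 / 4)
      = (noisyPR p 0 0 0 1 - 1 / 4) * (noisyPR p 0 0 1 0 - 1 / 4) := by
    rw [← c00, ← c01, ← c10, ← c11]; ring
  simp [noisyPR] at key
  rcases key with key | key <;> linarith
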